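/- Let d ≥ 1 and k ≥ 1 be integers, let Φ_{d,k} be the Wendland function on ℝ^d, and let C₁, C₂ > 0. There exists a constant C depending only on d, k, C₁, C₂ such that for every h ∈ (0,1], every finite set Ξ ⊆ B̄(0, C₁h) ⊆ ℝ^d, and every family of real numbers (a_ξ)_{ξ∈Ξ} satisfying Σ_{ξ∈Ξ} |a_ξ| ≤ C₂ and Σ_{ξ∈Ξ} a_ξ q(ξ) = q(0) for every polynomial q on ℝ^d of degree at most 2k−1, one has |Φ_{d,k}(x) − Σ_{ξ∈Ξ} a_ξ Φ_{d,k}(x−ξ)| ≤ C h^{2k} for all x ∈ ℝ^d. -/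

import Mathlib

/-!
The kernel `Φ = Φ_{d,k}` is of class `C^{2k}` with compact support, so its derivative of order `2k`
is bounded. Taylor's formula then gives, uniformly in `x`, a polynomial `q` of degree at most
`2k - 1` in `ξ` with `|Φ(x - ξ) - q(ξ)| ≤ M ‖ξ‖^{2k}` (`taylor_poly_approx`). Since the
coefficients reproduce `q(0) = Φ(x)`, the error `Φ(x) - Σ a_ξ Φ(x - ξ)` equals the sum of the
remainders weighted by `-a_ξ`, hence is at most `C₂ M (C₁ h)^{2k}` in absolute value.

The regularity of `Φ` (`contDiff_wendland`) has two sources. Away from the origin the norm is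
smooth, and the profile `I^k φ_l` is `C^{2k}` on the line because `φ_l` is `C^{l-1}` with
`l - 1 ≥ k` and every application of `I` gains one derivative (`contDiff_profile`). Near the origin
the profile is a polynomial in `r` without odd terms of order below `2k + 1` (`profile_poly`):
even powers of `‖x‖` are smooth, and `‖x‖^{n+1}` is `C^n` because it is homogeneous of degree
`n + 1` and smooth off the origin (`contDiff_of_homogeneous`).
-/

open MeasureTheory Metric Set Complex
open scoped RealInnerProductSpace

noncomputable section

/-- The truncated power `φ_l(r) = (1-r)_+^l`. -/
def phiTrunc (l : ℕ) (r : ℝ) : ℝ := (max (1 - r) 0) ^ l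

/-- Wendland's integral operator `(Iφ)(r) = ∫_r^∞ t φ(t) dt`. -/
def Iop (φ : ℝ → ℝ) (r : ℝ) : ℝ := ∫ t in Set.Ioi r, t * φ t

/-- The Wendland function `Φ_{d,k}(x) = (I^k φ_l)(‖x‖₂)` with `l = ⌊d/2⌋ + k + 1`. -/
def wendland (d k : ℕ) (x : EuclideanSpace ℝ (Fin d)) : ℝ :=
  (Iop^[k] (phiTrunc (d / 2 + k + 1))) ‖x‖

/-! ### Homogeneous functions -/

lemma homogeneous_growth {E : Type*} [NormedAddCommGroup E] [NormedSpace ℝ E]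
    [FiniteDimensional ℝ E] {f : E → ℝ} {m : ℕ}
    (hf : ∀ x, x ≠ 0 → ContinuousAt f x)
    (hom : ∀ c : ℝ, 0 < c → ∀ x, f (c • x) = c ^ (m + 1) * f x) :
    ∃ M : ℝ, ∀ x, |f x| ≤ M * ‖x‖ ^ (m + 1) := by
  have h0 : f 0 = 0 := by
    have h := hom 2 two_pos 0
    have h2 : (1 : ℝ) < 2 ^ (m + 1) := one_lt_pow₀ one_lt_two (Nat.succ_ne_zero m)
    rw [smul_zero] at h
    nlinarith
  have : ProperSpace E := FiniteDimensional.proper_real E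
  obtain ⟨M, hM⟩ := (isCompact_sphere (0 : E) 1).exists_bound_of_continuousOn
    (f := f) (fun x hx => (hf x (by rintro rfl; simp at hx)).continuousWithinAt)
  refine ⟨M, fun x => ?_⟩
  rcases eq_or_ne x 0 with rfl | hx
  · simp [h0]
  have hn : 0 < ‖x‖ := norm_pos_iff.2 hx
  have h1 : f x = ‖x‖ ^ (m + 1) * f (‖x‖⁻¹ • x) := by
    rw [← hom _ hn, smul_smul, mul_inv_cancel₀ hn.ne', one_smul]
  have h2 := hM (‖x‖⁻¹ • x) (by simp [norm_smul, hn.ne'])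
  rw [Real.norm_eq_abs] at h2
  rw [h1, abs_mul, abs_of_pos (by positivity), mul_comm]
  gcongr

/-- A positively homogeneous function of degree `n + 1` that is `C^n` off the origin is `C^n`
everywhere: its directional derivatives are homogeneous of degree `n`, so induction applies, and
the growth bound gives continuity, respectively differentiability, at the origin. -/
lemma contDiff_of_homogeneous {E : Type*} [NormedAddCommGroup E] [NormedSpace ℝ E]
    [FiniteDimensional ℝ E] (n : ℕ) : ∀ f : E → ℝ,
    (∀ x, x ≠ 0 → ContDiffAt ℝ n f x) →
    (∀ c : ℝ, 0 < c → ∀ x, f (c • x) = c ^ (n + 1) * f x) → ContDiff ℝ n f := by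
  induction n with
  | zero =>
    intro f hf hom
    obtain ⟨M, hM⟩ := homogeneous_growth (fun x hx => (hf x hx).continuousAt) hom
    rw [Nat.cast_zero, contDiff_zero, continuous_iff_continuousAt]
    intro x
    rcases eq_or_ne x 0 with rfl | hx
    · have h0 : f 0 = 0 := by simpa using hM 0
      rw [ContinuousAt, h0]
      refine squeeze_zero_norm (fun x => hM x) ?_
      have : Continuous fun x : E => M * ‖x‖ ^ (0 + 1) := by fun_prop
      simpa using this.tendsto 0
    · exact (hf x hx).continuousAt
  | succ n ih =>
    intro f hf hom
    obtain ⟨M, hM⟩ := homogeneous_growth (fun x hx => (hf x hx).continuousAt) hom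
    have hd : Differentiable ℝ f := by
      intro x
      rcases eq_or_ne x 0 with rfl | hx
      · have h0 : f 0 = 0 := by simpa using hM 0
        have : HasFDerivAt f (0 : E →L[ℝ] ℝ) 0 := by
          refine HasFDerivAt.of_isLittleO ?_
          simp only [h0, sub_zero, zero_apply]
          have h1 : f =O[nhds 0] fun x : E => ‖x‖ ^ (n + 1 + 1) :=
            Asymptotics.IsBigO.of_bound M (Filter.Eventually.of_forall fun x => by
              simpa using hM x)
          refine h1.trans_isLittleO ?_
          have := Asymptotics.isLittleO_norm_pow_id (E' := E) (n := n + 1 + 1) (by omega)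
          simpa using this
        exact this.differentiableAt
      · exact (hf x hx).differentiableAt (by simp)
    push_cast
    rw [contDiff_succ_iff_fderiv_apply]
    refine ⟨hd, by simp, fun y => ih _ (fun x hx => ?_) (fun c hc x => ?_)⟩
    · exact ((hf x hx).fderiv_right (m := n) (by simp)).clm_apply contDiffAt_const
    · have h1 : HasFDerivAt (fun z => f (c • z)) ((fderiv ℝ f (c • x)).comp
          (c • ContinuousLinearMap.id ℝ E)) x :=
        (hd (c • x)).hasFDerivAt.comp x ((hasFDerivAt_id x).const_smul c)
      have h2 : HasFDerivAt (fun z => f (c • z)) (c ^ (n + 1 + 1) • fderiv ℝ f x) x := by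
        have := (hd x).hasFDerivAt.const_mul (c ^ (n + 1 + 1))
        refine this.congr_of_eventuallyEq (Filter.Eventually.of_forall fun z => hom c hc z)
      have h3 := congrArg (fun L : E →L[ℝ] ℝ => L y) (h1.unique h2)
      simp at h3
      have : c * (fderiv ℝ f (c • x) y) = c * (c ^ (n + 1) * fderiv ℝ f x y) := by
        rw [h3]; ring
      exact mul_left_cancel₀ hc.ne' this

lemma contDiff_norm_pow_succ {E : Type*} [NormedAddCommGroup E] [InnerProductSpace ℝ E]
    [FiniteDimensional ℝ E] (n : ℕ) : ContDiff ℝ n fun x : E => ‖x‖ ^ (n + 1) := by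
  refine contDiff_of_homogeneous n _ (fun x hx => (contDiffAt_norm ℝ hx).pow _) fun c hc x => ?_
  rw [norm_smul, mul_pow, Real.norm_of_nonneg hc.le]

lemma contDiff_phiTrunc (n : ℕ) : ContDiff ℝ n (phiTrunc (n + 1)) := by
  have h : ContDiff ℝ n fun x : ℝ => (max x 0) ^ (n + 1) := by
    refine contDiff_of_homogeneous n _ (fun x hx => ?_) fun c hc x => ?_
    · rcases lt_or_gt_of_ne hx with h | h
      · refine (contDiffAt_const (c := (0 : ℝ))).congr_of_eventuallyEq ?_
        filter_upwards [Iio_mem_nhds h] with y hy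
        simp [max_eq_right (mem_Iio.1 hy).le]
      · refine (contDiffAt_id.pow (n + 1)).congr_of_eventuallyEq ?_
        filter_upwards [Ioi_mem_nhds h] with y hy
        simp [max_eq_left (mem_Ioi.1 hy).le]
    · rw [← mul_pow, mul_max_of_nonneg _ _ hc.le, smul_eq_mul, mul_zero]
  exact h.comp (contDiff_const.sub contDiff_id)

/-! ### The radial profile -/

lemma Iop_eq_zero {φ : ℝ → ℝ} (h : ∀ r, 1 ≤ r → φ r = 0) (r : ℝ) (hr : 1 ≤ r) :
    Iop φ r = 0 := by
  refine setIntegral_eq_zero_of_forall_eq_zero fun t ht => ?_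
  rw [h t (hr.trans (le_of_lt ht)), mul_zero]

/-- For a profile vanishing on `[1, ∞)` the improper integral is an interval integral, for every
real base point (the orientation takes care of `r > 1`). -/
lemma Iop_eq_interval {φ : ℝ → ℝ} (h : ∀ r, 1 ≤ r → φ r = 0) (r : ℝ) :
    Iop φ r = ∫ t in r..1, t * φ t := by
  rcases le_total r 1 with hr | hr
  · rw [intervalIntegral.integral_of_le hr, Iop]
    refine setIntegral_eq_of_subset_of_forall_sdiff_eq_zero measurableSet_Ioi
      Ioc_subset_Ioi_self fun t ht => ?_
    have : 1 ≤ t := by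
      by_contra hlt
      exact ht.2 ⟨ht.1, (not_le.1 hlt).le⟩
    rw [h t this, mul_zero]
  · rw [Iop_eq_zero h r hr, intervalIntegral.integral_symm, intervalIntegral.integral_of_le hr,
      setIntegral_eq_zero_of_forall_eq_zero, neg_zero]
    intro t ht
    rw [h t ht.1.le, mul_zero]

lemma contDiff_Iop {φ : ℝ → ℝ} {n : ℕ} (h : ∀ r, 1 ≤ r → φ r = 0) (hφ : ContDiff ℝ n φ) :
    ContDiff ℝ (n + 1 : ℕ) (Iop φ) := by
  have hc : Continuous fun t => t * φ t := continuous_id.mul hφ.continuous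
  have hd : ∀ r, HasDerivAt (Iop φ) (-(r * φ r)) r := fun r => by
    rw [funext (Iop_eq_interval h)]
    exact intervalIntegral.integral_hasDerivAt_left (hc.intervalIntegrable _ _)
      hc.stronglyMeasurable.stronglyMeasurableAtFilter hc.continuousAt
  push_cast
  rw [contDiff_succ_iff_deriv]
  refine ⟨fun r => (hd r).differentiableAt, by simp, ?_⟩
  rw [funext fun r => (hd r).deriv]
  exact (contDiff_id.mul hφ).neg

/-- The radial profile `I^j φ_l`. -/
def profile (l j : ℕ) : ℝ → ℝ := Iop^[j] (phiTrunc l)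

lemma profile_succ (l j : ℕ) : profile l (j + 1) = Iop (profile l j) :=
  Function.iterate_succ_apply' _ _ _

lemma profile_eq_zero {l : ℕ} (hl : l ≠ 0) (j : ℕ) : ∀ r, 1 ≤ r → profile l j r = 0 := by
  induction j with
  | zero =>
    intro r hr
    simp [profile, phiTrunc, max_eq_right (sub_nonpos.2 hr), hl]
  | succ j ih => rw [profile_succ]; exact Iop_eq_zero ih

lemma contDiff_profile (n j : ℕ) : ContDiff ℝ (n + j : ℕ) (profile (n + 1) j) := by
  induction j with
  | zero => exact contDiff_phiTrunc n
  | succ j ih =>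
    rw [profile_succ]
    exact contDiff_Iop (profile_eq_zero (Nat.succ_ne_zero n) j) ih

/-- On `[0, 1]` the profile `I^j φ_l` is a polynomial whose odd coefficients of order below
`2j + 1` vanish: each application of `I` raises the order of every nonconstant term by `2`. -/
lemma profile_poly (l j : ℕ) : ∃ (N : ℕ) (c : ℕ → ℝ), (∀ i, Odd i → i < 2 * j + 1 → c i = 0) ∧
    ∀ r ∈ Icc (0 : ℝ) 1, profile (l + 1) j r = ∑ i ∈ Finset.range N, c i * r ^ i := by
  induction j with
  | zero =>
    refine ⟨l + 1 + 1, fun i => (-1) ^ i * ((l + 1).choose i : ℝ), ?_, fun r hr => ?_⟩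
    · rintro i ⟨m, rfl⟩ hi
      omega
    · have : profile (l + 1) 0 r = (-r + 1) ^ (l + 1) := by
        simp only [profile, Function.iterate_zero, id, phiTrunc]
        rw [max_eq_left (sub_nonneg.2 hr.2)]
        ring
      rw [this, add_pow]
      refine Finset.sum_congr rfl fun i _ => ?_
      rw [neg_pow, one_pow]
      ring
  | succ j ih =>
    obtain ⟨N, c, hc, hp⟩ := ih
    refine ⟨N + 2, fun i => match i with
      | 0 => ∑ i ∈ Finset.range N, c i / (i + 2)
      | 1 => 0
      | i + 2 => -(c i / (i + 2)), ?_, fun r hr => ?_⟩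
    · rintro i hodd hi
      match i with
      | 0 => simp at hodd
      | 1 => rfl
      | i + 2 =>
        have h1 : Odd i := by
          rcases hodd with ⟨m, hm⟩
          exact ⟨m - 1, by omega⟩
        simp [hc i h1 (by omega)]
    · rw [profile_succ, Iop_eq_interval (profile_eq_zero (Nat.succ_ne_zero l) j)]
      have h1 : ∫ t in r..1, t * profile (l + 1) j t =
          ∫ t in r..1, ∑ i ∈ Finset.range N, c i * t ^ (i + 1) := by
        refine intervalIntegral.integral_congr fun t ht => ?_
        rw [uIcc_of_le hr.2] at ht
        rw [hp t ⟨hr.1.trans ht.1, ht.2⟩, Finset.mul_sum]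
        exact Finset.sum_congr rfl fun i _ => by ring
      rw [h1, intervalIntegral.integral_finsetSum fun i _ =>
        (Continuous.intervalIntegrable (by fun_prop) _ _)]
      rw [Finset.sum_range_succ', Finset.sum_range_succ']
      simp only [zero_add, zero_mul, add_zero, pow_zero, mul_one]
      rw [← Finset.sum_add_distrib]
      refine Finset.sum_congr rfl fun i _ => ?_
      rw [intervalIntegral.integral_const_mul, integral_pow]
      push_cast
      have : (i : ℝ) + 2 ≠ 0 := by positivity
      have h3 : (i : ℝ) + 1 + 1 ≠ 0 := by positivity
      field_simp
      ring

/-! ### Regularity of the Wendland function -/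

lemma contDiff_wendland (d k : ℕ) : ContDiff ℝ (2 * k : ℕ) (wendland d k) := by
  rw [contDiff_iff_contDiffAt]
  intro x
  rcases eq_or_ne x 0 with rfl | hx
  · obtain ⟨N, c, hc, hp⟩ := profile_poly (d / 2 + k) k
    have hsum : ContDiff ℝ (2 * k : ℕ) fun x : EuclideanSpace ℝ (Fin d) =>
        ∑ i ∈ Finset.range N, c i * ‖x‖ ^ i := by
      refine ContDiff.sum fun i _ => ?_
      rcases Nat.even_or_odd i with ⟨m, rfl⟩ | hi
      · have : ContDiff ℝ (2 * k : ℕ) fun x : EuclideanSpace ℝ (Fin d) => (‖x‖ ^ 2) ^ m :=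
          (contDiff_norm_sq ℝ).pow m
        simp_rw [← pow_mul, two_mul m] at this
        exact contDiff_const.mul this
      · rcases lt_or_ge i (2 * k + 1) with hlt | hge
        · simp only [hc i hi hlt, zero_mul]
          exact contDiff_const
        · obtain ⟨m, rfl⟩ : ∃ m, i = m + 1 := ⟨i - 1, by omega⟩
          exact contDiff_const.mul
            ((contDiff_norm_pow_succ m).of_le (by exact_mod_cast (by omega : 2 * k ≤ m)))
    refine hsum.contDiffAt.congr_of_eventuallyEq ?_
    filter_upwards [ball_mem_nhds (0 : EuclideanSpace ℝ (Fin d)) one_pos] with y hy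
    exact hp ‖y‖ ⟨norm_nonneg y, (mem_ball_zero_iff.1 hy).le⟩
  · have h := (contDiff_profile (d / 2 + k) k).of_le
      (m := (2 * k : ℕ)) (by exact_mod_cast (by omega))
    exact h.contDiffAt.comp x (contDiffAt_norm ℝ hx)

lemma hasCompactSupport_wendland (d k : ℕ) : HasCompactSupport (wendland d k) := by
  refine HasCompactSupport.intro (isCompact_closedBall (0 : EuclideanSpace ℝ (Fin d)) 1)
    fun x hx => ?_
  rw [mem_closedBall_zero_iff, not_le] at hx
  exact profile_eq_zero (Nat.succ_ne_zero _) k _ hx.le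

/-! ### Taylor approximation -/

/-- The diagonal of a `j`-linear form on `ℝ^d` is a polynomial of degree at most `j` in the
coordinates. -/
lemma multilinear_diagonal_poly {d j : ℕ}
    (L : EuclideanSpace ℝ (Fin d) [×j]→L[ℝ] ℝ) :
    ∃ q : MvPolynomial (Fin d) ℝ, q.totalDegree ≤ j ∧
      ∀ ξ : EuclideanSpace ℝ (Fin d), MvPolynomial.eval (fun i => ξ i) q = L fun _ => ξ := by
  refine ⟨∑ r : Fin j → Fin d,
    MvPolynomial.C (L fun i => EuclideanSpace.single (r i) 1) * ∏ i, MvPolynomial.X (r i),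
    ?_, fun ξ => ?_⟩
  · refine MvPolynomial.totalDegree_finsetSum_le fun r _ => ?_
    refine (MvPolynomial.totalDegree_mul _ _).trans ?_
    rw [MvPolynomial.totalDegree_C, zero_add]
    refine (MvPolynomial.totalDegree_finsetProd _ _).trans ?_
    simp
  · have h : ξ = ∑ i, ξ i • EuclideanSpace.single i (1 : ℝ) := by
      simpa using ((EuclideanSpace.basisFun (Fin d) ℝ).sum_repr ξ).symm
    conv_rhs => rw [h]
    rw [L.map_sum (fun _ i => ξ i • EuclideanSpace.single i (1 : ℝ))]
    simp only [map_sum, map_mul, map_prod, MvPolynomial.eval_C, MvPolynomial.eval_X]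
    refine Finset.sum_congr rfl fun r _ => ?_
    rw [L.map_smul_univ, smul_eq_mul, mul_comm]

/-- Uniform Taylor approximation of order `n + 1` for compactly supported `C^{n+1}` functions. -/
lemma taylor_poly_approx {d n : ℕ} {f : EuclideanSpace ℝ (Fin d) → ℝ}
    (hf : ContDiff ℝ (n + 1 : ℕ) f) (hs : HasCompactSupport f) :
    ∃ M : ℝ, 0 ≤ M ∧ ∀ x, ∃ q : MvPolynomial (Fin d) ℝ, q.totalDegree ≤ n ∧
      ∀ ξ : EuclideanSpace ℝ (Fin d),
        |f (x - ξ) - MvPolynomial.eval (fun i => ξ i) q| ≤ M * ‖ξ‖ ^ (n + 1) := by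
  obtain ⟨M, hM⟩ := (hs.iteratedFDeriv (𝕜 := ℝ) (n + 1)).exists_bound_of_continuous
    (hf.continuous_iteratedFDeriv le_rfl)
  have hM0 : 0 ≤ M := (norm_nonneg _).trans (hM 0)
  refine ⟨M, hM0, fun x => ?_⟩
  choose p hpdeg hp using fun j : ℕ => multilinear_diagonal_poly (iteratedFDeriv ℝ j f x)
  -- Replacing `ξ` by `-ξ` multiplies the `j`-th Taylor term by `(-1)^j`.
  refine ⟨∑ j ∈ Finset.range (n + 1),
    MvPolynomial.C ((j.factorial : ℝ)⁻¹ * (-1) ^ j) * p j, ?_, fun ξ => ?_⟩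
  · refine MvPolynomial.totalDegree_finsetSum_le fun j hj => ?_
    refine (MvPolynomial.totalDegree_mul _ _).trans ?_
    rw [MvPolynomial.totalDegree_C, zero_add]
    exact (hpdeg j).trans (Nat.lt_succ_iff.1 (Finset.mem_range.1 hj))
  · have hT := map_add_eq_sum_add_integral_iteratedFDeriv (f := f) (x := x) (y := -ξ) (n := n)
      fun t _ => by exact_mod_cast hf.contDiffAt
    have hsum : MvPolynomial.eval (fun i => ξ i) (∑ j ∈ Finset.range (n + 1),
        MvPolynomial.C ((j.factorial : ℝ)⁻¹ * (-1) ^ j) * p j) =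
        ∑ j ∈ Finset.range (n + 1),
          (j.factorial : ℝ)⁻¹ • iteratedFDeriv ℝ j f x (fun _ => -ξ) := by
      simp only [map_sum, map_mul, MvPolynomial.eval_C, hp]
      refine Finset.sum_congr rfl fun j _ => ?_
      have : (fun _ : Fin j => -ξ) = fun _ => (-1 : ℝ) • ξ := by simp
      rw [this, ContinuousMultilinearMap.map_smul_univ]
      simp [mul_assoc]
    rw [hsum, sub_eq_add_neg x ξ, hT, add_sub_cancel_left, smul_eq_mul, abs_mul]
    have hint : |∫ t in (0 : ℝ)..1, (1 - t) ^ n •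
        iteratedFDeriv ℝ (n + 1) f (x + t • -ξ) (fun _ => -ξ)| ≤ M * ‖ξ‖ ^ (n + 1) := by
      have := intervalIntegral.norm_integral_le_of_norm_le_const (a := (0 : ℝ)) (b := 1)
        (C := M * ‖ξ‖ ^ (n + 1)) (f := fun t => (1 - t) ^ n •
          iteratedFDeriv ℝ (n + 1) f (x + t • -ξ) (fun _ => -ξ)) ?_
      · simpa using this
      intro t ht
      rw [uIoc_of_le zero_le_one] at ht
      have h1 : ‖iteratedFDeriv ℝ (n + 1) f (x + t • -ξ) (fun _ => -ξ)‖ ≤ M * ‖ξ‖ ^ (n + 1) := by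
        refine (ContinuousMultilinearMap.le_opNorm _ _).trans ?_
        simp only [norm_neg, Finset.prod_const, Finset.card_univ, Fintype.card_fin]
        gcongr
        exact hM _
      rw [norm_smul, norm_pow, Real.norm_of_nonneg (by linarith [ht.2])]
      exact (mul_le_of_le_one_left (norm_nonneg _)
        (pow_le_one₀ (by linarith [ht.2]) (by linarith [ht.1]))).trans h1
    have hfac : |((n.factorial : ℝ))⁻¹| ≤ 1 := by
      rw [abs_of_nonneg (by positivity)]
      exact inv_le_one_of_one_le₀ (by exact_mod_cast n.factorial_pos)
    exact (mul_le_of_le_one_left (abs_nonneg _) hfac).trans hint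

/-- kernel estimate for Wendland functions.
If `d ≥ 1`, `k ≥ 1`, and `(a_ξ)_{ξ∈Ξ}` are coefficients supported in `B̄(0, C₁h)` with
`Σ|a_ξ| ≤ C₂` reproducing the value at `0` of every polynomial of degree `≤ 2k-1`, then
`|Φ_{d,k}(x) - Σ a_ξ Φ_{d,k}(x-ξ)| ≤ C h^{2k}` for all `x`. -/
theorem stmt10 (d k : ℕ) (hd : 1 ≤ d) (hk : 1 ≤ k)
    (C₁ C₂ : ℝ) (hC₁ : 0 < C₁) (hC₂ : 0 < C₂) :
    ∃ C : ℝ, 0 < C ∧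
      ∀ h : ℝ, 0 < h → h ≤ 1 →
      ∀ (Ξ : Finset (EuclideanSpace ℝ (Fin d))) (a : EuclideanSpace ℝ (Fin d) → ℝ),
        (∀ ξ ∈ Ξ, ‖ξ‖ ≤ C₁ * h) →
        (∑ ξ ∈ Ξ, |a ξ| ≤ C₂) →
        (∀ q : MvPolynomial (Fin d) ℝ, q.totalDegree ≤ 2 * k - 1 →
          ∑ ξ ∈ Ξ, a ξ * MvPolynomial.eval (fun i => ξ i) q =
            MvPolynomial.eval (fun _ => (0 : ℝ)) q) →
        ∀ x : EuclideanSpace ℝ (Fin d),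
          |wendland d k x - ∑ ξ ∈ Ξ, a ξ * wendland d k (x - ξ)| ≤ C * h ^ (2 * k) := by
  obtain ⟨n, hn⟩ : ∃ n, 2 * k = n + 1 := ⟨2 * k - 1, by omega⟩
  obtain ⟨M, hM0, hM⟩ := taylor_poly_approx (n := n)
    (hn ▸ contDiff_wendland d k) (hasCompactSupport_wendland d k)
  -- The summand `1` only serves to make the constant positive.
  refine ⟨C₂ * (M * C₁ ^ (2 * k)) + 1, by positivity, ?_⟩
  intro h h0 _ Ξ a hΞ ha hq x
  obtain ⟨q, hqdeg, hqx⟩ := hM x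
  -- The remainder bound at `ξ = 0` forces the constant term of `q` to be `Φ(x)`.
  have hx0 : wendland d k x = MvPolynomial.eval (fun _ => (0 : ℝ)) q := by
    have := hqx 0
    simpa [sub_eq_zero] using this
  have hdiff : wendland d k x - ∑ ξ ∈ Ξ, a ξ * wendland d k (x - ξ) =
      -∑ ξ ∈ Ξ, a ξ * (wendland d k (x - ξ) - MvPolynomial.eval (fun i => ξ i) q) := by
    rw [hx0, ← hq q (by omega)]
    simp only [mul_sub, Finset.sum_sub_distrib]
    ring
  rw [hdiff, abs_neg]
  calc |∑ ξ ∈ Ξ, a ξ * (wendland d k (x - ξ) - MvPolynomial.eval (fun i => ξ i) q)|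
      ≤ ∑ ξ ∈ Ξ, |a ξ| * (M * (C₁ * h) ^ (n + 1)) := by
        refine (Finset.abs_sum_le_sum_abs _ _).trans (Finset.sum_le_sum fun ξ hξ => ?_)
        rw [abs_mul]
        gcongr
        refine (hqx ξ).trans ?_
        gcongr
        exact hΞ ξ hξ
    _ ≤ C₂ * (M * (C₁ * h) ^ (n + 1)) := by
        rw [← Finset.sum_mul]
        gcongr
    _ ≤ (C₂ * (M * C₁ ^ (2 * k)) + 1) * h ^ (2 * k) := by
        rw [hn, mul_pow]
        have : 0 < h ^ (n + 1) := by positivity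
        linarith
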